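/- Monotonicity of the supply dual in the demand duals: let α, α′ : J → ℝ with α_j ≤ α′_j for all j, fix an impression i, and let b (respectively b′) be the unique value ≥ 0 such that either it equals 0 and Σ_{j∈Γ(i)} g_{ij}(α_j) ≤ 1 (resp. Σ_{j∈Γ(i)} g_{ij}(α′_j) ≤ 1), or Σ_{j∈Γ(i)} g_{ij}(α_j − b) = 1 (resp. Σ_{j∈Γ(i)} g_{ij}(α′_j − b′) = 1). Then b ≤ b′. -/

import Mathlib

open Finset Filter Topology

noncomputable section

variable {I J : Type*} [Fintype I] [Fintype J]

open Classical in
/-- Γ(j): the impressions eligible for contract `j`. -/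
def GammaD (adj : I → J → Prop) (j : J) : Finset I :=
  Finset.univ.filter (fun i => adj i j)

open Classical in
/-- Γ(i): the contracts eligible for impression `i`. -/
def GammaS (adj : I → J → Prop) (i : I) : Finset J :=
  Finset.univ.filter (fun j => adj i j)

/-- Total eligible supply `S_j = ∑_{i ∈ Γ(j)} s_i`. -/
def Stot (adj : I → J → Prop) (s : I → ℝ) (j : J) : ℝ :=
  ∑ i ∈ GammaD adj j, s i

/-- Target `θ_{ij} = d_j / S_j` (independent of `i`). -/
def theta (adj : I → J → Prop) (s : I → ℝ) (d : J → ℝ) (j : J) : ℝ :=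
  d j / Stot adj s j

/-- `g_{ij}(z) = max {0, θ_{ij} (1 + z / V_j)}` (independent of `i`). -/
def gfun (adj : I → J → Prop) (s : I → ℝ) (d V : J → ℝ) (j : J) (z : ℝ) : ℝ :=
  max 0 ((theta adj s d j) * (1 + z / V j))

/-- `b` is a valid supply dual `β_i` for demand duals `α`: `b ≥ 0` and either `b = 0` with
`∑_{j ∈ Γ(i)} g_{ij}(α_j) ≤ 1`, or `∑_{j ∈ Γ(i)} g_{ij}(α_j − b) = 1`. -/
def BetaSpec (adj : I → J → Prop) (s : I → ℝ) (d V : J → ℝ)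
    (α : J → ℝ) (i : I) (b : ℝ) : Prop :=
  0 ≤ b ∧ ((b = 0 ∧ ∑ j ∈ GammaS adj i, gfun adj s d V j (α j) ≤ 1) ∨
    ∑ j ∈ GammaS adj i, gfun adj s d V j (α j - b) = 1)

/-- Stage One of SHALE: `α⁰ = 0`; `β^t_i` is a valid supply dual for `α^t`; and
`α^{t+1}_j = min (p_j) a_j` where `a_j` solves `∑_{i ∈ Γ(j)} s_i g_{ij}(a_j − β^t_i) = d_j`. -/
def StageOne (adj : I → J → Prop) (s : I → ℝ) (d p V : J → ℝ)
    (α : ℕ → J → ℝ) (β : ℕ → I → ℝ) : Prop :=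
  (∀ j, α 0 j = 0) ∧
  (∀ t i, BetaSpec adj s d V (α t) i (β t i)) ∧
  (∀ t j, ∃ a : ℝ,
    (∑ i ∈ GammaD adj j, s i * gfun adj s d V j (a - β t i) = d j) ∧
    α (t + 1) j = min (p j) a)

/-- Projected delivery `d_j(α) = ∑_{i ∈ Γ(j)} s_i g_{ij}(α_j − β_i)`. -/
def Dproj (adj : I → J → Prop) (s : I → ℝ) (d V : J → ℝ)
    (α : J → ℝ) (β : I → ℝ) (j : J) : ℝ :=
  ∑ i ∈ GammaD adj j, s i * gfun adj s d V j (α j - β i)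

/-- The objective of the allocation problem. -/
def Fobj (adj : I → J → Prop) (s : I → ℝ) (d p V : J → ℝ)
    (x : I → J → ℝ) (u : J → ℝ) : ℝ :=
  (1 / 2) * ∑ j, ∑ i ∈ GammaD adj j,
      s i * (V j / theta adj s d j) * (x i j - theta adj s d j) ^ 2
    + ∑ j, p j * u j

/-- Feasibility for the allocation problem. -/
def Feasible (adj : I → J → Prop) (s : I → ℝ) (d : J → ℝ)
    (x : I → J → ℝ) (u : J → ℝ) : Prop :=
  (∀ j, d j ≤ ∑ i ∈ GammaD adj j, s i * x i j + u j) ∧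
  (∀ i, ∑ j ∈ GammaS adj i, x i j ≤ 1) ∧
  (∀ i j, adj i j → 0 ≤ x i j) ∧
  (∀ j, 0 ≤ u j)

/-- The KKT conditions for duals `(α, β)`. -/
def KKT (adj : I → J → Prop) (s : I → ℝ) (d p V : J → ℝ)
    (α : J → ℝ) (β : I → ℝ) : Prop :=
  (∀ j, 0 ≤ α j ∧ α j ≤ p j) ∧
  (∀ i, 0 ≤ β i ∧ (∑ j ∈ GammaS adj i, gfun adj s d V j (α j - β i) ≤ 1) ∧
    (0 < β i → ∑ j ∈ GammaS adj i, gfun adj s d V j (α j - β i) = 1)) ∧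
  (∀ j, (∑ i ∈ GammaD adj j, s i * gfun adj s d V j (α j - β i) ≤ d j) ∧
    (α j < p j → ∑ i ∈ GammaD adj j, s i * gfun adj s d V j (α j - β i) = d j))

/-
If `b' < b`, then `0 < b`, so the allocation at `α - b` uses the impression exactly. Each argument
`α j - b` is smaller than `α' j - b'`, and the response functions are strictly increasing wherever
they are positive, so the allocation at `α' - b'` would exceed `1`.
-/

lemma strictMonoOn_max_of_strictMono {X R : Type*} [Preorder X] [LinearOrder R] {f : X → R}
    (hf : StrictMono f) (c : R) :
    StrictMonoOn (fun x => max c (f x)) {x | c < max c (f x)} := by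
  intro x hx y _ hxy
  have hcx : c < f x := (lt_max_iff.mp hx).resolve_left (lt_irrefl c)
  have hfxy : f x < f y := hf hxy
  exact max_lt (lt_max_of_lt_right (hcx.trans hfxy)) (lt_max_of_lt_right hfxy)

lemma sum_lt_sum_of_strictMonoOn_pos {ι X R : Type*} [Preorder X]
    [AddCommMonoid R] [LinearOrder R] [IsOrderedCancelAddMonoid R]
    {t : Finset ι} {f : ι → X → R} {x y : ι → X}
    (hmono : ∀ k ∈ t, Monotone (f k))
    (hstrict : ∀ k ∈ t, StrictMonoOn (f k) {z | 0 < f k z})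
    (hxy : ∀ k ∈ t, x k < y k) (hpos : 0 < ∑ k ∈ t, f k (x k)) :
    ∑ k ∈ t, f k (x k) < ∑ k ∈ t, f k (y k) := by
  have hle : ∀ k ∈ t, f k (x k) ≤ f k (y k) := fun k hk => hmono k hk (hxy k hk).le
  obtain ⟨k, hk, hk_pos⟩ : ∃ k ∈ t, 0 < f k (x k) :=
    Finset.exists_lt_of_sum_lt (by simpa only [Finset.sum_const_zero] using hpos)
  exact Finset.sum_lt_sum hle
    ⟨k, hk, hstrict k hk hk_pos (hk_pos.trans_le (hle k hk)) (hxy k hk)⟩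

section Response

variable {J : Type*} {adj : I → J → Prop} {s : I → ℝ} {d V : J → ℝ} {j : J}

lemma theta_pos (hd : 0 < d j) (hS : 0 < Stot adj s j) : 0 < theta adj s d j :=
  div_pos hd hS

lemma gfun_monotone (hθ : 0 ≤ theta adj s d j) (hV : 0 ≤ V j) :
    Monotone (gfun adj s d V j) := by
  intro x y hxy
  unfold gfun
  gcongr

lemma gfun_strictMonoOn_pos (hθ : 0 < theta adj s d j) (hV : 0 < V j) :
    StrictMonoOn (gfun adj s d V j) {z | 0 < gfun adj s d V j z} := by
  have haffine : StrictMono fun z => theta adj s d j * (1 + z / V j) := by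
    intro x y hxy
    dsimp only
    gcongr
  exact strictMonoOn_max_of_strictMono haffine 0

end Response

namespace BetaSpec

variable {adj : I → J → Prop} {s : I → ℝ} {d V α : J → ℝ} {i : I} {b : ℝ}

lemma sum_gfun_le_one (h : BetaSpec adj s d V α i b) :
    ∑ j ∈ GammaS adj i, gfun adj s d V j (α j - b) ≤ 1 := by
  rcases h.2 with ⟨rfl, hle⟩ | heq
  · simpa only [sub_zero] using hle
  · exact heq.le

lemma sum_gfun_eq_one_of_pos (h : BetaSpec adj s d V α i b) (hb : 0 < b) :
    ∑ j ∈ GammaS adj i, gfun adj s d V j (α j - b) = 1 :=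
  h.2.resolve_left fun hzero => hb.ne' hzero.1

end BetaSpec

theorem beta_monotone_in_alpha
    (adj : I → J → Prop) (s : I → ℝ) (d p V : J → ℝ)
    (hs : ∀ i, 0 < s i) (hd : ∀ j, 0 < d j) (hp : ∀ j, 0 < p j) (hV : ∀ j, 0 < V j)
    (hS : ∀ j, 0 < Stot adj s j)
    (α α' : J → ℝ) (hle : ∀ j, α j ≤ α' j) (i : I) (b b' : ℝ)
    (hb : BetaSpec adj s d V α i b) (hb' : BetaSpec adj s d V α' i b') :
    b ≤ b' := by
  by_contra! hlt
  have hθ : ∀ j, 0 < theta adj s d j := fun j => theta_pos (hd j) (hS j)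
  have htight : ∑ j ∈ GammaS adj i, gfun adj s d V j (α j - b) = 1 :=
    hb.sum_gfun_eq_one_of_pos (hb'.1.trans_lt hlt)
  have hincrease : ∑ j ∈ GammaS adj i, gfun adj s d V j (α j - b)
      < ∑ j ∈ GammaS adj i, gfun adj s d V j (α' j - b') :=
    sum_lt_sum_of_strictMonoOn_pos
      (fun j _ => gfun_monotone (hθ j).le (hV j).le)
      (fun j _ => gfun_strictMonoOn_pos (hθ j) (hV j))
      (fun j _ => by linarith [hle j])
      (htight ▸ one_pos)
  exact (htight ▸ hincrease).not_ge hb'.sum_gfun_le_one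

end
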